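/- Let f : 𝖱^n → 𝖱 be continuous, let I ⊆ N = {1,…,n} be nonempty, and suppose f is I-bounded. Then for every c ∈ 𝖱 there exists d ∈ 𝖱 such that for every b ∈ [0,c]^{N∖I}, the restriction of f to E_I(b,d) is constant. -/

import Mathlib

noncomputable section
open Set

/-- The first uncountable ordinal `ω₁`. -/
def Omega1 : Ordinal := Ordinal.omega 1

/-- The closed long ray `𝖱`: `ω₁ × [0,1)` with the lexicographic order. -/
def LongRay : Type 1 := {o : Ordinal // o < Omega1} ×ₗ (Set.Ico (0:ℝ) 1)

instance : LinearOrder LongRay :=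
  inferInstanceAs (LinearOrder ({o : Ordinal // o < Omega1} ×ₗ (Set.Ico (0:ℝ) 1)))

/-- `𝖱` carries the order topology. -/
instance : TopologicalSpace LongRay := Preorder.topology LongRay
instance : OrderTopology LongRay := ⟨rfl⟩

lemma omega1_pos : (0 : Ordinal) < Omega1 := Ordinal.omega_pos 1

/-- The point `0 = (0,0)` of the long ray. -/
def rayZero : LongRay := toLex (⟨0, omega1_pos⟩, ⟨0, by simp⟩)

/-- Identification of the countable ordinal `o` with the point `(o,0)` of the long ray
(junk value for `o ≥ ω₁`). -/
def ordR (o : Ordinal) : LongRay :=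
  if h : o < Omega1 then toLex (⟨o, h⟩, ⟨0, by simp⟩) else rayZero

/-- The `I`-diagonal at height `c` (only the values of `c` off `I` are relevant). -/
def Delta (n : ℕ) (I : Finset (Fin n)) (c : Fin n → LongRay) : Set (Fin n → LongRay) :=
  {x | (∀ i ∈ I, ∀ i' ∈ I, x i = x i') ∧ ∀ j ∉ I, x j = c j}

/-- `f` is `I`-cofinal if `f` restricted to `Δ_I = Δ_I(0)` is unbounded. -/
def ICofinal (n : ℕ) (f : (Fin n → LongRay) → LongRay) (I : Finset (Fin n)) : Prop :=
  ¬ BddAbove (f '' Delta n I (fun _ => rayZero))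

/-- The cofinality class `𝔠(f) = {I : f is I-cofinal}`. -/
def cofClass (n : ℕ) (f : (Fin n → LongRay) → LongRay) : Set (Finset (Fin n)) :=
  {I | ICofinal n f I}

/-- `M_I(c) = {x : x_i ≥ c for all i ∈ I}`. -/
def MSet (n : ℕ) (I : Finset (Fin n)) (c : LongRay) : Set (Fin n → LongRay) :=
  {x | ∀ i ∈ I, c ≤ x i}

/-- `E_I(b,d) = {x ∈ M_I(d) : x_j = b_j for all j ∉ I}`. -/
def ESet (n : ℕ) (I : Finset (Fin n)) (b : Fin n → LongRay) (d : LongRay) :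
    Set (Fin n → LongRay) :=
  {x | (∀ i ∈ I, d ≤ x i) ∧ ∀ j ∉ I, x j = b j}

open Filter Topology

section LongOrder

variable {L : Type*} [ConditionallyCompleteLinearOrder L] [TopologicalSpace L] [OrderTopology L]
  {ι : Type*} [Finite ι] {K : Type*} [TopologicalSpace K] [CompactSpace K]

/-- If every countable set is bounded above, then beyond some height the sections of a continuous
function with compact parameter space do not cross a given gap. -/
lemma exists_not_crossing [Nonempty L] (hcount : ∀ s : Set L, s.Countable → BddAbove s)
    {F : K × (ι → L) → L} (hF : Continuous F) {p q : L} (hpq : p < q) :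
    ∃ d : L, ∀ b x y, (∀ i, d ≤ x i) → (∀ i, d ≤ y i) → F (b, x) ≤ p → ¬ q ≤ F (b, y) := by
  by_contra! H
  choose b x y hx hy hp hq using H
  have step : ∀ d, ∃ d', d ≤ d' ∧ (∀ i, x d i ≤ d') ∧ ∀ i, y d i ≤ d' := by
    intro d
    obtain ⟨u, hu⟩ := hcount (range (x d)) (finite_range _).countable
    obtain ⟨v, hv⟩ := hcount (range (y d)) (finite_range _).countable
    exact ⟨d ⊔ (u ⊔ v), le_sup_left,
      fun i => (hu (mem_range_self i)).trans (le_sup_left.trans le_sup_right),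
      fun i => (hv (mem_range_self i)).trans (le_sup_right.trans le_sup_right)⟩
  choose next hd hxn hyn using step
  let D : ℕ → L := fun k => next^[k] (Classical.arbitrary L)
  have hD : ∀ k, D (k + 1) = next (D k) := fun k => Function.iterate_succ_apply' _ _ _
  have hmono : Monotone D := monotone_nat_of_le_succ fun k => by rw [hD]; exact hd _
  have hlim : Tendsto D atTop (𝓝 (⨆ k, D k)) :=
    tendsto_atTop_ciSup hmono (hcount _ (countable_range D))
  have hlim' : Tendsto (fun k => next (D k)) atTop (𝓝 (⨆ k, D k)) := by
    simp only [← hD]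
    exact hlim.comp (tendsto_add_atTop_nat 1)
  have hU : (hyperfilter ℕ : Filter ℕ) ≤ atTop := Nat.hyperfilter_le_atTop
  have hb := ((hyperfilter ℕ).map fun k => b (D k)).le_nhds_lim
  have hxl : Tendsto (fun k => x (D k)) (hyperfilter ℕ) (𝓝 fun _ => ⨆ k, D k) :=
    tendsto_pi_nhds.2 fun i => (tendsto_of_tendsto_of_tendsto_of_le_of_le hlim hlim'
      (fun k => hx (D k) i) (fun k => hxn (D k) i)).mono_left hU
  have hyl : Tendsto (fun k => y (D k)) (hyperfilter ℕ) (𝓝 fun _ => ⨆ k, D k) :=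
    tendsto_pi_nhds.2 fun i => (tendsto_of_tendsto_of_tendsto_of_le_of_le hlim hlim'
      (fun k => hy (D k) i) (fun k => hyn (D k) i)).mono_left hU
  have h₁ := le_of_tendsto (hF.continuousAt.tendsto.comp
    (Tendsto.prodMk_nhds (f := (hyperfilter ℕ : Filter ℕ)) hb hxl))
    (Eventually.of_forall fun k => hp (D k))
  have h₂ := ge_of_tendsto (hF.continuousAt.tendsto.comp
    (Tendsto.prodMk_nhds (f := (hyperfilter ℕ : Filter ℕ)) hb hyl))
    (Eventually.of_forall fun k => hq (D k))
  exact absurd (h₂.trans h₁) hpq.not_ge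

/-- Beyond some height, a section taking a value below `u` is constant. -/
lemma exists_constant_of_lt [Nonempty L] (hcount : ∀ s : Set L, s.Countable → BddAbove s)
    (hsep : ∀ u : L, ∃ S : Set L, S.Countable ∧ ∀ a b, a < b → b ≤ u → ∃ s ∈ S, a < s ∧ s < b)
    {F : K × (ι → L) → L} (hF : Continuous F) (u : L) :
    ∃ d : L, ∀ b x y, (∀ i, d ≤ x i) → (∀ i, d ≤ y i) → F (b, x) < u → F (b, x) = F (b, y) := by
  obtain ⟨S, hS, hSd⟩ := hsep u
  have : ∀ r : L × L, ∃ d : L, r.1 < r.2 → ∀ b x y, (∀ i, d ≤ x i) → (∀ i, d ≤ y i) →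
      F (b, x) ≤ r.1 → ¬ r.2 ≤ F (b, y) := by
    intro r
    by_cases h : r.1 < r.2
    · obtain ⟨d, hd⟩ := exists_not_crossing hcount hF h
      exact ⟨d, fun _ => hd⟩
    · exact ⟨Classical.arbitrary L, fun h' => absurd h' h⟩
  choose D hD using this
  obtain ⟨d, hd⟩ := hcount _ ((hS.prod hS).image D)
  have key : ∀ b x y, (∀ i, d ≤ x i) → (∀ i, d ≤ y i) → F (b, x) < u → F (b, y) ≤ F (b, x) := by
    intro b x y hx hy hu
    by_contra! hlt
    obtain ⟨q, hqS, hxq, hq⟩ := hSd _ _ (lt_min hu hlt) (min_le_left _ _)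
    obtain ⟨p, hpS, hxp, hpq⟩ := hSd _ _ hxq (hq.le.trans (min_le_left _ _))
    have hle : D (p, q) ≤ d := hd ⟨(p, q), ⟨hpS, hqS⟩, rfl⟩
    exact hD (p, q) hpq b x y (fun i => hle.trans (hx i)) (fun i => hle.trans (hy i)) hxp.le
      (hq.le.trans (min_le_right _ _))
  refine ⟨d, fun b x y hx hy hu => ?_⟩
  have h := key b x y hx hy hu
  exact le_antisymm (key b y x hy hx (h.trans_lt hu)) h

/-- A continuous function with compact connected separable parameter space, bounded on the diagonal
for one parameter, has constant sections beyond a common height. -/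
lemma exists_constant_sections [Nonempty L] [NoMaxOrder L] [PreconnectedSpace K]
    [TopologicalSpace.SeparableSpace K] (hcount : ∀ s : Set L, s.Countable → BddAbove s)
    (hsep : ∀ u : L, ∃ S : Set L, S.Countable ∧ ∀ a b, a < b → b ≤ u → ∃ s ∈ S, a < s ∧ s < b)
    {F : K × (ι → L) → L} (hF : Continuous F) (k₀ : K)
    (hbd : BddAbove (range fun z : L => F (k₀, fun _ => z))) :
    ∃ d : L, ∀ b x y, (∀ i, d ≤ x i) → (∀ i, d ≤ y i) → F (b, x) = F (b, y) := by
  let C : L → Set K := fun d => {b | ∀ x y, (∀ i, d ≤ x i) → (∀ i, d ≤ y i) → F (b, x) = F (b, y)}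
  have hmono : Monotone C := fun d d' h b hb x y hx hy =>
    hb x y (fun i => h.trans (hx i)) (fun i => h.trans (hy i))
  have hclosed : ∀ d, IsClosed (C d) := by
    intro d
    simp only [C, ofPred_forall]
    exact isClosed_iInter fun x => isClosed_iInter fun y => isClosed_iInter fun _ =>
      isClosed_iInter fun _ => isClosed_eq (by fun_prop) (by fun_prop)
  have hconst : ∀ u d b, F (b, fun _ => d) < u →
      (∀ b x y, (∀ i, d ≤ x i) → (∀ i, d ≤ y i) → F (b, x) < u → F (b, x) = F (b, y)) →
      b ∈ C d := fun u d b hu h x y hx hy =>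
    (h b _ x (fun _ => le_rfl) hx hu).symm.trans (h b _ y (fun _ => le_rfl) hy hu)
  have hk₀ : k₀ ∈ ⋃ d, C d := by
    obtain ⟨e, he⟩ := hbd
    obtain ⟨u, hu⟩ := exists_gt e
    obtain ⟨d, hd⟩ := exists_constant_of_lt hcount hsep hF u
    exact mem_iUnion.2 ⟨d, hconst u d k₀ ((he ⟨d, rfl⟩).trans_lt hu) hd⟩
  have hopen : IsOpen (⋃ d, C d) := by
    refine isOpen_iff_mem_nhds.2 fun b hb => ?_
    obtain ⟨d, hbd⟩ := mem_iUnion.1 hb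
    obtain ⟨u, hu⟩ := exists_gt (F (b, fun _ => d))
    obtain ⟨d', hd'⟩ := exists_constant_of_lt hcount hsep hF u
    have hlt : F (b, fun _ => d ⊔ d') < u := by
      rwa [← hbd (fun _ => d) _ (fun _ => le_rfl) fun _ => le_sup_left]
    have hnhds : ∀ᶠ b' in 𝓝 b, F (b', fun _ => d ⊔ d') < u :=
      (Continuous.tendsto (by fun_prop) b).eventually_lt_const hlt
    filter_upwards [hnhds] with b' hb'
    exact mem_iUnion.2 ⟨_, hconst u _ b' hb' fun b x y hx hy =>
      hd' b x y (fun i => le_sup_right.trans (hx i)) (fun i => le_sup_right.trans (hy i))⟩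
  obtain ⟨T, hT, hTd⟩ := TopologicalSpace.exists_countable_dense K
  have : ∀ b, ∃ d, b ∈ (⋃ d, C d) → b ∈ C d := by
    intro b
    by_cases hb : b ∈ ⋃ d, C d
    · obtain ⟨d, h⟩ := mem_iUnion.1 hb
      exact ⟨d, fun _ => h⟩
    · exact ⟨Classical.arbitrary L, fun h => absurd h hb⟩
  choose D hD using this
  obtain ⟨d, hd⟩ := hcount _ (hT.image D)
  have hsub : (⋃ d, C d) ⊆ C d :=
    (hTd.open_subset_closure_inter hopen).trans <| closure_minimal
      (fun b hb => hmono (hd ⟨b, hb.2, rfl⟩) (hD b hb.1)) (hclosed d)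
  have heq : (⋃ d, C d) = C d := hsub.antisymm (subset_iUnion C d)
  have huniv := IsClopen.eq_univ ⟨heq ▸ hclosed d, hopen⟩ ⟨k₀, hk₀⟩
  exact ⟨d, fun b => hsub (huniv ▸ mem_univ b)⟩

end LongOrder

namespace LongRay

lemma lt_iff {x y : LongRay} : x < y ↔
    (ofLex x).1 < (ofLex y).1 ∨ (ofLex x).1 = (ofLex y).1 ∧ (ofLex x).2 < (ofLex y).2 :=
  Prod.Lex.lt_iff

lemma le_iff {x y : LongRay} : x ≤ y ↔
    (ofLex x).1 < (ofLex y).1 ∨ (ofLex x).1 = (ofLex y).1 ∧ (ofLex x).2 ≤ (ofLex y).2 :=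
  Prod.Lex.le_iff

lemma rayZero_le (x : LongRay) : rayZero ≤ x := by
  rw [le_iff]
  rcases eq_or_ne (ofLex x).1 ⟨0, omega1_pos⟩ with h | h
  · exact Or.inr ⟨h.symm, (ofLex x).2.2.1⟩
  · left
    have : (ofLex x).1.1 ≠ 0 := fun h' => h (Subtype.ext h')
    exact pos_iff_ne_zero.2 this

lemma exists_isLUB (s : Set LongRay) (hs : BddAbove s) : ∃ z, IsLUB s z := by
  let A : Set {o : Ordinal // o < Omega1} := (fun x : LongRay => (ofLex x).1) '' upperBounds s
  have hA : A.Nonempty := hs.image _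
  have hwf : WellFounded ((· < ·) : {o : Ordinal // o < Omega1} → _ → Prop) := wellFounded_lt
  obtain ⟨w, hw, hwα⟩ := hwf.min_mem A hA
  set α := hwf.min A hA
  have hmin : ∀ x ∈ upperBounds s, α ≤ (ofLex x).1 := fun x hx =>
    not_lt.1 (hwf.not_lt_min A ⟨x, hx, rfl⟩)
  let R : Set ℝ := {r | ∃ h : r ∈ Ico (0 : ℝ) 1, (toLex (α, ⟨r, h⟩) : LongRay) ∈ upperBounds s}
  have hwR : ((ofLex w).2 : ℝ) ∈ R := by
    refine ⟨(ofLex w).2.2, ?_⟩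
    rw [← hwα]
    exact hw
  have hR0 : BddBelow R := ⟨0, fun r hr => hr.1.1⟩
  have hI : sInf R ∈ Ico (0 : ℝ) 1 :=
    ⟨le_csInf ⟨_, hwR⟩ fun r hr => hr.1.1, (csInf_le hR0 hwR).trans_lt (ofLex w).2.2.2⟩
  refine ⟨toLex (α, ⟨sInf R, hI⟩), fun x hx => ?_, fun y hy => ?_⟩
  · refine le_iff.2 ?_
    rcases le_iff.1 (hw hx) with h | h
    · exact Or.inl (hwα ▸ h)
    · refine Or.inr ⟨h.1.trans hwα, ?_⟩
      change ((ofLex x).2 : ℝ) ≤ sInf R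
      refine le_csInf ⟨_, hwR⟩ fun r hr => ?_
      obtain ⟨hr1, hr2⟩ := hr
      rcases le_iff.1 (hr2 hx) with h' | h'
      · exact absurd (h.1.trans hwα) (ne_of_lt h')
      · exact h'.2
  · refine le_iff.2 ?_
    rcases (hmin y hy).lt_or_eq with h | h
    · exact Or.inl h
    · refine Or.inr ⟨h, csInf_le hR0 ⟨(ofLex y).2.2, ?_⟩⟩
      rw [h]
      exact hy

open Classical in
instance : SupSet LongRay :=
  ⟨fun s => if h : BddAbove s then (exists_isLUB s h).choose else rayZero⟩

lemma isLUB_sSup (s : Set LongRay) (hs : BddAbove s) : IsLUB s (sSup s) := by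
  simp only [sSup, dif_pos hs]
  exact (exists_isLUB s hs).choose_spec

end LongRay

namespace LongRay

open Classical in
/-- The long ray is conditionally complete. -/
abbrev conditionallyCompleteLinearOrder : ConditionallyCompleteLinearOrder LongRay where
  __ := (inferInstance : LinearOrder LongRay)
  __ := conditionallyCompleteLatticeOfLatticeOfsSup LongRay fun s hs _ => isLUB_sSup s hs
  csSup_of_not_bddAbove s hs := by
    have h : sSup (∅ : Set LongRay) = rayZero :=
      le_antisymm ((isLUB_sSup ∅ bddAbove_empty).2 (by simp)) (rayZero_le _)
    exact (dif_neg hs).trans h.symm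
  csInf_of_not_bddBelow s hs := absurd ⟨rayZero, fun x _ => rayZero_le x⟩ hs

instance : Nonempty LongRay := ⟨rayZero⟩

lemma succ_lt_omega1 {o : Ordinal} (h : o < Omega1) : Order.succ o < Omega1 :=
  (Cardinal.isSuccLimit_omega 1).succ_lt h

lemma bddAbove_of_countable (s : Set LongRay) (hs : s.Countable) : BddAbove s := by
  have := hs.to_subtype
  let g : s → Ordinal := fun x => Order.succ (ofLex x.1).1.1
  have hg : ⨆ x, g x < Omega1 :=
    Ordinal.iSup_lt_omega_one fun x => succ_lt_omega1 (ofLex x.1).1.2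
  refine ⟨toLex (⟨⨆ x, g x, hg⟩, ⟨0, by simp⟩), fun x hx => le_iff.2 (Or.inl ?_)⟩
  exact (Order.lt_succ (ofLex x).1.1).trans_le (Ordinal.le_iSup g ⟨x, hx⟩)

lemma exists_countable_order_dense (u : LongRay) : ∃ S : Set LongRay, S.Countable ∧
    ∀ a b, a < b → b ≤ u → ∃ s ∈ S, a < s ∧ s < b := by
  let A : Set {o : Ordinal // o < Omega1} := Iic (ofLex u).1
  have hA : A.Countable := by
    have h : (Iio (Order.succ (ofLex u).1.1)).Countable := by
      rw [← Cardinal.le_aleph0_iff_set_countable, Cardinal.mk_Iio_ordinal, Cardinal.lift_le_aleph0,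
        ← Cardinal.lt_aleph_one_iff, ← Cardinal.lt_ord]
      simpa [Omega1] using succ_lt_omega1 (ofLex u).1.2
    refine (h.preimage Subtype.val_injective).mono fun x (hx : x ≤ (ofLex u).1) => ?_
    exact Order.lt_succ_iff.2 (Subtype.coe_le_coe.2 hx)
  let Q : Set (Ico (0 : ℝ) 1) := Subtype.val ⁻¹' range ((↑) : ℚ → ℝ)
  have hQ : Q.Countable := (countable_range _).preimage Subtype.val_injective
  refine ⟨(fun p => (toLex p : LongRay)) '' (A ×ˢ Q), (hA.prod hQ).image _, fun a b hab hbu => ?_⟩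
  have hmem : ∀ t : ℝ, ((ofLex a).2 : ℝ) < t → t ≤ 1 → ∃ q : Ico (0 : ℝ) 1,
      q ∈ Q ∧ (ofLex a).2 < q ∧ (q : ℝ) < t := by
    intro t hat ht
    obtain ⟨q, haq, hqt⟩ := exists_rat_btwn hat
    exact ⟨⟨q, (ofLex a).2.2.1.trans haq.le, hqt.trans_le ht⟩, ⟨q, rfl⟩, haq, hqt⟩
  have haA : (ofLex a).1 ∈ A := (le_iff.1 (hab.le.trans hbu)).elim le_of_lt fun h => h.1.le
  rcases lt_iff.1 hab with h | ⟨h, h'⟩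
  · obtain ⟨q, hq, haq, -⟩ := hmem 1 (ofLex a).2.2.2 le_rfl
    exact ⟨_, ⟨((ofLex a).1, q), ⟨haA, hq⟩, rfl⟩, lt_iff.2 (Or.inr ⟨rfl, haq⟩), lt_iff.2 (Or.inl h)⟩
  · obtain ⟨q, hq, haq, hqb⟩ := hmem _ h' (ofLex b).2.2.2.le
    exact ⟨_, ⟨((ofLex a).1, q), ⟨haA, hq⟩, rfl⟩, lt_iff.2 (Or.inr ⟨rfl, haq⟩),
      lt_iff.2 (Or.inr ⟨h, hqb⟩)⟩

instance : DenselyOrdered LongRay where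
  dense a b hab := by
    obtain ⟨S, -, hS⟩ := exists_countable_order_dense b
    obtain ⟨s, -, hs⟩ := hS a b hab le_rfl
    exact ⟨s, hs⟩

instance : NoMaxOrder LongRay where
  exists_gt x :=
    ⟨toLex (⟨Order.succ (ofLex x).1.1, succ_lt_omega1 (ofLex x).1.2⟩, ⟨0, by simp⟩),
      lt_iff.2 (Or.inl (Order.lt_succ (ofLex x).1.1))⟩

lemma compactSpace_Iic (c : LongRay) : CompactSpace (Iic c) := by
  let _ := conditionallyCompleteLinearOrder
  have : Iic c = Icc rayZero c := by
    ext x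
    simp [rayZero_le]
  rw [this]
  exact isCompact_iff_compactSpace.1 isCompact_Icc

lemma preconnectedSpace_Iic (c : LongRay) : PreconnectedSpace (Iic c) :=
  let _ := conditionallyCompleteLinearOrder
  Subtype.preconnectedSpace isPreconnected_Iic

lemma separableSpace_Iic {c : LongRay} (hc : rayZero < c) :
    TopologicalSpace.SeparableSpace (Iic c) := by
  obtain ⟨S, hS, hSd⟩ := exists_countable_order_dense c
  have : Nontrivial (Iic c) := ⟨⟨rayZero, hc.le⟩, ⟨c, self_mem_Iic⟩,
    fun h => hc.ne (congrArg Subtype.val h)⟩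
  refine ⟨Subtype.val ⁻¹' S, hS.preimage Subtype.val_injective,
    dense_of_exists_between fun {a b} hab => ?_⟩
  obtain ⟨s, hs, has, hsb⟩ := hSd a b hab b.2
  exact ⟨⟨s, hsb.le.trans b.2⟩, hs, has, hsb⟩

end LongRay

/-- if `f` is `I`-bounded then for every `c` there is `d` such that for
every `b ∈ [0,c]^{N∖I}`, `f` is constant on `E_I(b,d)`. -/
theorem bounded_direction_constant (n : ℕ) (f : (Fin n → LongRay) → LongRay)
    (hf : Continuous f) (I : Finset (Fin n)) (hI : I.Nonempty)
    (hbd : ¬ ICofinal n f I) :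
    ∀ c : LongRay, ∃ d : LongRay, ∀ b : Fin n → LongRay, (∀ j ∉ I, b j ≤ c) →
      ∀ x ∈ ESet n I b d, ∀ y ∈ ESet n I b d, f x = f y := by
  intro c
  obtain ⟨c', hc⟩ := exists_gt c
  have hc0 : rayZero < c' := (LongRay.rayZero_le c).trans_lt hc
  have := LongRay.compactSpace_Iic c'
  have := LongRay.separableSpace_Iic hc0
  have := LongRay.preconnectedSpace_Iic c'
  let mix : (Fin n → Iic c') × (Fin n → LongRay) → Fin n → LongRay :=
    fun p j => if j ∈ I then p.2 j else p.1 j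
  have hmix : Continuous mix := by
    refine continuous_pi fun j => ?_
    by_cases hj : j ∈ I
    · simp only [mix, if_pos hj]
      fun_prop
    · simp only [mix, if_neg hj]
      fun_prop
  have hbdd : BddAbove (f '' Delta n I fun _ => rayZero) := not_not.1 hbd
  let _ := LongRay.conditionallyCompleteLinearOrder
  obtain ⟨d, hd⟩ := exists_constant_sections (L := LongRay) LongRay.bddAbove_of_countable
    LongRay.exists_countable_order_dense (hf.comp hmix) (fun _ => ⟨rayZero, hc0.le⟩)
    (hbdd.mono (by
      rintro _ ⟨z, rfl⟩
      refine ⟨_, ⟨fun i hi i' hi' => ?_, fun j hj => ?_⟩, rfl⟩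
      · simp [mix, hi, hi']
      · simp [mix, hj]))
  have hrep : ∀ b x, (∀ j ∉ I, b j ≤ c) → x ∈ ESet n I b d →
      mix (fun j => ⟨min (b j) c', mem_Iic.2 (min_le_right _ _)⟩, fun j => max d (x j)) = x := by
    intro b x hb hx
    funext j
    by_cases hj : j ∈ I
    · simp [mix, hj, hx.1 j hj]
    · simp [mix, hj, hx.2 j hj, (hb j hj).trans hc.le]
  refine ⟨d, fun b hb x hx y hy => ?_⟩
  rw [← hrep b x hb hx, ← hrep b y hb hy]
  exact hd _ _ _ (fun i => le_max_left _ _) (fun i => le_max_left _ _)
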